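/- Let N ≥ 1, let σ_1,…,σ_N be class-K∞ functions and μ_1,…,μ_N > 0. Define σ(s) := min{ Σ_{i=1}^N μ_i σ_i(s_i) : s_1,…,s_N ≥ 0, Σ_{i=1}^N μ_i s_i = s } for s ≥ 0. Then the minimum is attained for every s ≥ 0 and σ is a class-K∞ function; in particular, for all s_1,…,s_N ≥ 0 one has σ(Σ_{i=1}^N μ_i s_i) ≤ Σ_{i=1}^N μ_i σ_i(s_i). -/

import Mathlib

/-!
After rescaling `sᵢ = s tᵢ / μᵢ`, the constraint set `{sᵢ ≥ 0, ∑ μᵢ sᵢ = s}` becomes the standard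
simplex, which is compact and does not depend on `s`. Hence `σ(s)` is the minimum over a fixed
compact set of a jointly continuous function `F(s, t) = ∑ μᵢ σᵢ(s tᵢ / μᵢ)`, so it is attained and
continuous in `s`. For fixed `t` in the simplex `F(·, t)` is strictly increasing, and evaluating at
a minimizer for the larger argument shows that `σ` is strictly increasing. Finally, some `tᵢ` is at
least `1 / N`, so `σ(s) ≥ minᵢ μᵢ σᵢ(s / (N μᵢ))`, which is unbounded.
-/

open Filter

/-- A class-K function: continuous, strictly increasing on `[0,∞)`, and vanishing at `0`. -/
def ClassK (f : ℝ → ℝ) : Prop :=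
  ContinuousOn f (Set.Ici 0) ∧ StrictMonoOn f (Set.Ici 0) ∧ f 0 = 0

/-- A class-K∞ function: a class-K function that is unbounded. -/
def ClassKInf (f : ℝ → ℝ) : Prop :=
  ClassK f ∧ Tendsto f atTop atTop

/-- The objective in simplex coordinates, `F(s, t) = ∑ μᵢ σᵢ(s tᵢ / μᵢ)`. The argument of `σᵢ` is
clamped to `[0,∞)`, which changes nothing for `s, tᵢ ≥ 0` and makes `F` continuous everywhere. -/
noncomputable def simplexCost {N : ℕ} (σ : Fin N → ℝ → ℝ) (μ : Fin N → ℝ) (s : ℝ)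
    (t : Fin N → ℝ) : ℝ :=
  ∑ i, μ i * σ i (max (s * t i / μ i) 0)

lemma ClassKInf.nonneg {f : ℝ → ℝ} (hf : ClassKInf f) {x : ℝ} (hx : 0 ≤ x) : 0 ≤ f x := by
  have h := hf.1.2.1.monotoneOn (Set.mem_Ici.2 le_rfl) (Set.mem_Ici.2 hx) hx
  rwa [hf.1.2.2] at h

lemma simplexCost_continuous {N : ℕ} {σ : Fin N → ℝ → ℝ} {μ : Fin N → ℝ}
    (hσ : ∀ i, ClassKInf (σ i)) :
    Continuous fun p : ℝ × (Fin N → ℝ) => simplexCost σ μ p.1 p.2 := by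
  unfold simplexCost
  refine continuous_finsetSum _ fun i _ => continuous_const.mul ?_
  exact (hσ i).1.1.comp_continuous (by fun_prop) fun p => Set.mem_Ici.2 (le_max_right _ _)

lemma simplexCost_zero {N : ℕ} {σ : Fin N → ℝ → ℝ} {μ : Fin N → ℝ}
    (hσ : ∀ i, ClassKInf (σ i)) (t : Fin N → ℝ) : simplexCost σ μ 0 t = 0 := by
  simp [simplexCost, (hσ _).1.2.2]

/-- For `s ≥ 0` the set of admissible values is the image of the simplex. -/
lemma values_eq_image {N : ℕ} (hN : 1 ≤ N) {σ : Fin N → ℝ → ℝ} {μ : Fin N → ℝ}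
    (hσ : ∀ i, ClassKInf (σ i)) (hμ : ∀ i, 0 < μ i) {s : ℝ} (hs : 0 ≤ s) :
    {v : ℝ | ∃ sv : Fin N → ℝ,
      (∀ i, 0 ≤ sv i) ∧ (∑ i, μ i * sv i) = s ∧ v = ∑ i, μ i * σ i (sv i)} =
    simplexCost σ μ s '' stdSimplex ℝ (Fin N) := by
  have : Nonempty (Fin N) := ⟨⟨0, hN⟩⟩
  ext v
  constructor
  · rintro ⟨sv, h0, hsum, rfl⟩
    rcases hs.eq_or_lt with rfl | hpos
    · -- For `s = 0` every `sᵢ` vanishes, and any point of the simplex represents it.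
      have hz : ∀ i, sv i = 0 := fun i => by
        have := (Finset.sum_eq_zero_iff_of_nonneg
          (fun i _ => mul_nonneg (hμ i).le (h0 i))).1 hsum i (Finset.mem_univ i)
        exact (mul_eq_zero.1 this).resolve_left (hμ i).ne'
      obtain ⟨i⟩ := ‹Nonempty (Fin N)›
      refine ⟨_, single_mem_stdSimplex ℝ i, ?_⟩
      rw [simplexCost_zero hσ]
      simp [hz, (hσ _).1.2.2]
    · refine ⟨fun i => μ i * sv i / s, ⟨fun i => ?_, ?_⟩, ?_⟩
      · exact div_nonneg (mul_nonneg (hμ i).le (h0 i)) hs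
      · rw [← Finset.sum_div, hsum, div_self hpos.ne']
      · refine Finset.sum_congr rfl fun i _ => ?_
        have : s * (μ i * sv i / s) / μ i = sv i := by
          have := (hμ i).ne'
          field_simp
        rw [this, max_eq_left (h0 i)]
  · rintro ⟨t, ht, rfl⟩
    have h0 : ∀ i, 0 ≤ s * t i / μ i := fun i => div_nonneg (mul_nonneg hs (ht.1 i)) (hμ i).le
    refine ⟨fun i => s * t i / μ i, h0, ?_, ?_⟩
    · have : ∀ i, μ i * (s * t i / μ i) = s * t i := fun i => by
        have := (hμ i).ne'
        field_simp
      simp only [this]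
      rw [← Finset.mul_sum, ht.2, mul_one]
    · exact Finset.sum_congr rfl fun i _ => by rw [max_eq_left (h0 i)]

lemma simplexCost_lt {N : ℕ} {σ : Fin N → ℝ → ℝ} {μ : Fin N → ℝ}
    (hσ : ∀ i, ClassKInf (σ i)) (hμ : ∀ i, 0 < μ i) {a b : ℝ} (ha : 0 ≤ a) (hab : a < b)
    {t : Fin N → ℝ} (ht : t ∈ stdSimplex ℝ (Fin N)) :
    simplexCost σ μ a t < simplexCost σ μ b t := by
  have h0 : ∀ s, 0 ≤ s → ∀ i, 0 ≤ s * t i / μ i := fun s hs i =>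
    div_nonneg (mul_nonneg hs (ht.1 i)) (hμ i).le
  have hb := ha.trans hab.le
  obtain ⟨i, -, hi⟩ : ∃ i ∈ Finset.univ, 0 < t i :=
    Finset.exists_lt_of_sum_lt (f := fun _ => (0 : ℝ)) (by rw [ht.2]; simp)
  refine Finset.sum_lt_sum (fun j _ => ?_) ⟨i, Finset.mem_univ i, ?_⟩
  · rw [max_eq_left (h0 a ha j), max_eq_left (h0 b hb j)]
    refine mul_le_mul_of_nonneg_left ?_ (hμ j).le
    refine (hσ j).1.2.1.monotoneOn (h0 a ha j) (h0 b hb j) ?_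
    exact div_le_div_of_nonneg_right (mul_le_mul_of_nonneg_right hab.le (ht.1 j)) (hμ j).le
  · rw [max_eq_left (h0 a ha i), max_eq_left (h0 b hb i)]
    refine mul_lt_mul_of_pos_left ?_ (hμ i)
    refine (hσ i).1.2.1 (h0 a ha i) (h0 b hb i) ?_
    exact div_lt_div_of_pos_right (mul_lt_mul_of_pos_right hab hi) (hμ i)

/-- On the simplex the objective dominates one of the functions `μᵢ σᵢ(s / (N μᵢ))`, because some
coordinate is at least the average `1 / N`. -/
lemma exists_le_simplexCost {N : ℕ} (hN : 1 ≤ N) {σ : Fin N → ℝ → ℝ} {μ : Fin N → ℝ}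
    (hσ : ∀ i, ClassKInf (σ i)) (hμ : ∀ i, 0 < μ i) {s : ℝ} (hs : 0 ≤ s)
    {t : Fin N → ℝ} (ht : t ∈ stdSimplex ℝ (Fin N)) :
    ∃ i, μ i * σ i (s * (1 / N) / μ i) ≤ simplexCost σ μ s t := by
  have : Nonempty (Fin N) := ⟨⟨0, hN⟩⟩
  have hN0 : (N : ℝ) ≠ 0 := by positivity
  obtain ⟨i, -, hi⟩ : ∃ i ∈ Finset.univ, (1 / N : ℝ) ≤ t i :=
    Finset.exists_le_of_sum_le Finset.univ_nonempty (by rw [ht.2]; simp [hN0])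
  have h0 : 0 ≤ s * (1 / N) / μ i := div_nonneg (by positivity) (hμ i).le
  refine ⟨i, le_trans ?_ (Finset.single_le_sum
    (f := fun i => μ i * σ i (max (s * t i / μ i) 0))
    (fun j _ => mul_nonneg (hμ j).le ((hσ j).nonneg (le_max_right _ _))) (Finset.mem_univ i))⟩
  refine mul_le_mul_of_nonneg_left ?_ (hμ i).le
  refine (hσ i).1.2.1.monotoneOn h0 (Set.mem_Ici.2 (le_max_right _ _)) (le_max_of_le_left ?_)
  exact div_le_div_of_nonneg_right (mul_le_mul_of_nonneg_left hi hs) (hμ i).le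

/-- Let `σ₁,…,σ_N` be class-K∞ and `μᵢ > 0`, and define
`σ(s) = min { ∑ μᵢ σᵢ(sᵢ) : sᵢ ≥ 0, ∑ μᵢ sᵢ = s }`. Then the minimum is attained for every
`s ≥ 0`, `σ` is class-K∞, and `σ(∑ μᵢ sᵢ) ≤ ∑ μᵢ σᵢ(sᵢ)` for all `sᵢ ≥ 0`. -/
theorem stmt_7
    (N : ℕ) (hN : 1 ≤ N)
    (σ : Fin N → ℝ → ℝ) (μ : Fin N → ℝ)
    (hσ : ∀ i, ClassKInf (σ i)) (hμ : ∀ i, 0 < μ i)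
    (A : ℝ → Set ℝ)
    (hA : ∀ s, A s = {v : ℝ | ∃ sv : Fin N → ℝ,
      (∀ i, 0 ≤ sv i) ∧ (∑ i, μ i * sv i) = s ∧ v = ∑ i, μ i * σ i (sv i)})
    (σc : ℝ → ℝ) (hσc : ∀ s, σc s = sInf (A s)) :
    (∀ s ≥ (0:ℝ), ∃ v ∈ A s, ∀ v' ∈ A s, v ≤ v') ∧
    ClassKInf σc ∧
    (∀ sv : Fin N → ℝ, (∀ i, 0 ≤ sv i) →
      σc (∑ i, μ i * sv i) ≤ ∑ i, μ i * σ i (sv i)) := by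
  have : Nonempty (Fin N) := ⟨⟨0, hN⟩⟩
  have hK : IsCompact (stdSimplex ℝ (Fin N)) := isCompact_stdSimplex ℝ (Fin N)
  have hKne : (stdSimplex ℝ (Fin N)).Nonempty :=
    ⟨_, single_mem_stdSimplex ℝ (Classical.arbitrary (Fin N))⟩
  have hF := simplexCost_continuous (μ := μ) hσ
  have hFs : ∀ s, Continuous (simplexCost σ μ s) := fun s =>
    hF.comp (Continuous.prodMk_right s)
  have hAF : ∀ s, 0 ≤ s → A s = simplexCost σ μ s '' stdSimplex ℝ (Fin N) := fun s hs => by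
    rw [hA, values_eq_image hN hσ hμ hs]
  have hle : ∀ s, 0 ≤ s → ∀ v ∈ A s, σc s ≤ v := fun s hs v hv => by
    rw [hσc]
    refine csInf_le ?_ hv
    rw [hAF s hs]
    exact (hK.image (hFs s)).bddBelow
  have hatt : ∀ s, 0 ≤ s → ∃ t ∈ stdSimplex ℝ (Fin N), simplexCost σ μ s t = σc s :=
      fun s hs => by
    have := (hK.image (hFs s)).sInf_mem (hKne.image _)
    rwa [← hAF s hs, ← hσc, hAF s hs] at this
  refine ⟨fun s hs => ?_, ⟨⟨?_, ?_, ?_⟩, ?_⟩, fun sv hsv => ?_⟩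
  · obtain ⟨t, ht, hts⟩ := hatt s hs
    refine ⟨σc s, ?_, hle s hs⟩
    rw [hAF s hs]
    exact ⟨t, ht, hts⟩
  · have hc : Continuous fun s => sInf (simplexCost σ μ s '' stdSimplex ℝ (Fin N)) :=
      hK.continuous_sInf hF
    refine hc.continuousOn.congr fun s hs => ?_
    rw [hσc, hAF s hs]
  · intro a ha b hb hab
    obtain ⟨t, ht, hts⟩ := hatt b hb
    rw [← hts]
    refine (hle a ha _ ?_).trans_lt (simplexCost_lt hσ hμ ha hab ht)
    rw [hAF a ha]
    exact ⟨t, ht, rfl⟩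
  · obtain ⟨t, -, hts⟩ := hatt 0 le_rfl
    rw [← hts, simplexCost_zero hσ]
  · refine tendsto_atTop.2 fun C => ?_
    have hev : ∀ᶠ s : ℝ in atTop, ∀ i, C ≤ μ i * σ i (s * (1 / N) / μ i) := by
      refine eventually_all.2 fun i => ?_
      have hN0 : (0 : ℝ) < 1 / N := by positivity
      have h1 : Tendsto (fun s : ℝ => s * (1 / N) / μ i) atTop atTop :=
        (tendsto_id.atTop_mul_const hN0).atTop_div_const (hμ i)
      exact (((hσ i).2.comp h1).const_mul_atTop (hμ i)).eventually_ge_atTop C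
    filter_upwards [hev, eventually_ge_atTop 0] with s hs hs0
    obtain ⟨t, ht, hts⟩ := hatt s hs0
    obtain ⟨i, hi⟩ := exists_le_simplexCost hN hσ hμ hs0 ht
    exact (hs i).trans (hi.trans hts.le)
  · refine hle _ (Finset.sum_nonneg fun i _ => mul_nonneg (hμ i).le (hsv i)) _ ?_
    rw [hA]
    exact ⟨sv, hsv, rfl, rfl⟩
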